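/- Let D be a digraph on vertex type V and v ∈ V. If D is acyclic, then the detour D↑v is acyclic, and the bypass D↑↑v is acyclic. -/

import Mathlib

/-- The detour of a digraph (irreflexive relation) `A` at a vertex `v`. -/
def detour {V : Type*} (A : V → V → Prop) (v : V) : V → V → Prop :=
  fun x y => x ≠ v ∧ y ≠ v ∧ x ≠ y ∧ (A x y ∨ (A x v ∧ A v y))

/-- The bypass of `A` at `v`: the induced subdigraph of `detour A v` on `V \ {v}`. -/
def bypass {V : Type*} (A : V → V → Prop) (v : V) :
    {x : V // x ≠ v} → {x : V // x ≠ v} → Prop :=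
  fun x y => detour A v x.val y.val

open Function Relation

section

variable {V : Type*} (A : V → V → Prop) (v : V)

theorem detour_le_transGen : detour A v ≤ TransGen A := by
  rintro x y ⟨-, -, -, hxy | ⟨hxv, hvy⟩⟩
  · exact .single hxy
  · exact .head hxv (.single hvy)

theorem transGen_detour_le_transGen : TransGen (detour A v) ≤ TransGen A :=
  TransGen.closed (detour_le_transGen A v)

theorem transGen_bypass_le_transGen_detour :
    TransGen (bypass A v) ≤ (TransGen (detour A v) on Subtype.val) :=
  TransGen.lift Subtype.val le_rfl

end

/-- If `D` is acyclic, then so are the detour `D↑v` and the bypass `D↑↑v`. -/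
theorem detour_bypass_acyclic {V : Type*} (A : V → V → Prop) (hA : Irreflexive A)
    (hacyc : Irreflexive (Relation.TransGen A)) (v : V) :
    Irreflexive (Relation.TransGen (detour A v)) ∧
      Irreflexive (Relation.TransGen (bypass A v)) := by
  have detour_acyclic (x : V) (hx : TransGen (detour A v) x x) : False :=
    hacyc x (transGen_detour_le_transGen A v x x hx)
  exact ⟨detour_acyclic,
    fun x hx ↦ detour_acyclic x (transGen_bypass_le_transGen_detour A v x x hx)⟩
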